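/- Let K be a field and k ≥ 1 a natural number. Let I_k be the ideal of K[x_0, x_1, x_2, x_3] generated by the three binomials x_0^k x_2 x_3 − x_1^{k+2}, x_0 x_1^k x_3 − x_2^{k+2}, and x_0 x_1 x_2^k − x_3^{k+2}. Then I_k is not a lattice ideal: for every additive subgroup L of ℤ^4 (functions Fin 4 → ℤ), I_k is not equal to the ideal generated by all binomials x^u − x^v with u, v ∈ ℕ^4 and u − v ∈ L. -/

import Mathlib

open MvPolynomial

/-- The ideal `I_k` of `K[x_0,x_1,x_2,x_3]` generated by the deformed binomials
`x_0^k x_2 x_3 − x_1^{k+2}`, `x_0 x_1^k x_3 − x_2^{k+2}`, `x_0 x_1 x_2^k − x_3^{k+2}`. -/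
noncomputable def Ik (K : Type*) [Field K] (k : ℕ) : Ideal (MvPolynomial (Fin 4) K) :=
  Ideal.span {X 0 ^ k * X 2 * X 3 - X 1 ^ (k+2),
              X 0 * X 1 ^ k * X 3 - X 2 ^ (k+2),
              X 0 * X 1 * X 2 ^ k - X 3 ^ (k+2)}

/-- The lattice ideal of a set `L ⊆ ℤ^4`: the ideal of `K[x_0,…,x_3]` generated by
all binomials `x^u - x^v` with `u, v ∈ ℕ^4` and `u - v ∈ L`. -/
noncomputable def latticeIdeal (K : Type*) [Field K]
    (L : Set (Fin 4 → ℤ)) : Ideal (MvPolynomial (Fin 4) K) :=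
  Ideal.span {p | ∃ u v : Fin 4 → ℕ,
    (fun i => (u i : ℤ) - (v i : ℤ)) ∈ L ∧
    p = (∏ i, X i ^ u i) - (∏ i, X i ^ v i)}

/-!
The exponent vectors of the three generators of `I_k` add up to `(k+2, -1, -1, -k)`, so every
lattice ideal containing `I_k` contains `x_0^{k+2} - x_1 x_2 x_3^k`. But all three generators
vanish at the point `(1, 0, 0, 0)`, where this binomial takes the value `1`.
-/

/-- The homomorphism `R[x_i : i ∈ σ] → R[ℤ^σ ⧸ L]` sending a monomial to the class of its exponent
vector; it kills the lattice ideal of `L` and thereby detects which binomials lie in it. -/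
noncomputable def latticeQuotientHom (R : Type*) [CommSemiring R] {σ : Type*}
    (L : AddSubgroup (σ → ℤ)) : MvPolynomial σ R →ₐ[R] AddMonoidAlgebra R ((σ → ℤ) ⧸ L) :=
  AddMonoidAlgebra.mapDomainAlgHom R R <| (QuotientAddGroup.mk' L).comp <|
    Finsupp.coeFnAddHom.comp <| Finsupp.mapRange.addMonoidHom <| Nat.castAddMonoidHom ℤ

theorem latticeQuotientHom_monomial {R : Type*} [CommSemiring R] {σ : Type*}
    (L : AddSubgroup (σ → ℤ)) (s : σ →₀ ℕ) (r : R) :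
    latticeQuotientHom R L (monomial s r) =
      AddMonoidAlgebra.single (QuotientAddGroup.mk fun i => (s i : ℤ)) r :=
  AddMonoidAlgebra.mapDomain_single

theorem latticeQuotientHom_prod_X_pow {R : Type*} [CommSemiring R] {σ : Type*} [Fintype σ]
    (L : AddSubgroup (σ → ℤ)) (u : σ → ℕ) :
    latticeQuotientHom R L (∏ i, X i ^ u i) =
      AddMonoidAlgebra.single (QuotientAddGroup.mk fun i => (u i : ℤ)) 1 := by
  have prod_eq_monomial :
      ∏ i, X i ^ u i = monomial (Finsupp.equivFunOnFinite.symm u) (1 : R) := by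
    simp [monomial_eq, Finsupp.prod_fintype]
  rw [prod_eq_monomial, latticeQuotientHom_monomial]
  rfl

theorem latticeQuotientHom_binomial_eq_zero_iff {R : Type*} [CommRing R] [Nontrivial R]
    {σ : Type*} [Fintype σ] (L : AddSubgroup (σ → ℤ)) (u v : σ → ℕ) :
    latticeQuotientHom R L (∏ i, X i ^ u i - ∏ i, X i ^ v i) = 0 ↔
      (fun i => (u i : ℤ) - (v i : ℤ)) ∈ L := by
  rw [map_sub, latticeQuotientHom_prod_X_pow, latticeQuotientHom_prod_X_pow, sub_eq_zero,
    AddMonoidAlgebra.single_left_inj one_ne_zero, QuotientAddGroup.eq_iff_sub_mem]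
  rfl

section LatticeIdeal

variable {K : Type*} [Field K] {L : AddSubgroup (Fin 4 → ℤ)}

theorem latticeIdeal_le_ker_latticeQuotientHom :
    latticeIdeal K (L : Set (Fin 4 → ℤ)) ≤ RingHom.ker (latticeQuotientHom K L) := by
  refine Ideal.span_le.2 ?_
  rintro _ ⟨u, v, huv, rfl⟩
  exact (latticeQuotientHom_binomial_eq_zero_iff L u v).2 huv

theorem binomial_mem_latticeIdeal_iff (u v : Fin 4 → ℕ) :
    ∏ i, X i ^ u i - ∏ i, X i ^ v i ∈ latticeIdeal K (L : Set (Fin 4 → ℤ)) ↔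
      (fun i => (u i : ℤ) - (v i : ℤ)) ∈ L :=
  ⟨fun h => (latticeQuotientHom_binomial_eq_zero_iff L u v).1
      (latticeIdeal_le_ker_latticeQuotientHom h),
    fun h => Ideal.subset_span ⟨u, v, h, rfl⟩⟩

theorem X_zero_pow_sub_mem_latticeIdeal_of_Ik_le {k : ℕ}
    (hL : Ik K k ≤ latticeIdeal K (L : Set (Fin 4 → ℤ))) :
    X 0 ^ (k + 2) - X 1 * X 2 * X 3 ^ k ∈ latticeIdeal K (L : Set (Fin 4 → ℤ)) := by
  have mem₁ := (binomial_mem_latticeIdeal_iff (K := K) (L := L) ![k, 0, 1, 1] ![0, k + 2, 0, 0]).1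
    (hL <| Ideal.subset_span <| by simp [Fin.prod_univ_four])
  have mem₂ := (binomial_mem_latticeIdeal_iff (K := K) (L := L) ![1, k, 0, 1] ![0, 0, k + 2, 0]).1
    (hL <| Ideal.subset_span <| by simp [Fin.prod_univ_four])
  have mem₃ := (binomial_mem_latticeIdeal_iff (K := K) (L := L) ![1, 1, k, 0] ![0, 0, 0, k + 2]).1
    (hL <| Ideal.subset_span <| by simp [Fin.prod_univ_four])
  have mem_sum : (fun i => ((![k + 2, 0, 0, 0] i : ℕ) : ℤ) - (![0, 1, 1, k] i : ℕ)) ∈ L := by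
    convert L.add_mem (L.add_mem mem₁ mem₂) mem₃ using 1
    funext i
    fin_cases i <;> dsimp <;> ring
  simpa [Fin.prod_univ_four] using (binomial_mem_latticeIdeal_iff (K := K) _ _).2 mem_sum

end LatticeIdeal

theorem Ik_le_ker_eval (K : Type*) [Field K] (k : ℕ) :
    Ik K k ≤ RingHom.ker (eval (Pi.single 0 1 : Fin 4 → K)) := by
  refine Ideal.span_le.2 ?_
  rintro _ (rfl | rfl | rfl) <;> simp [RingHom.mem_ker]

theorem X_zero_pow_sub_notMem_Ik (K : Type*) [Field K] (k : ℕ) :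
    X 0 ^ (k + 2) - X 1 * X 2 * X 3 ^ k ∉ Ik K k := fun h => by
  simpa using RingHom.mem_ker.1 (Ik_le_ker_eval K k h)

theorem stmt10 (K : Type*) [Field K] (k : ℕ) (hk : 1 ≤ k) :
    ∀ L : AddSubgroup (Fin 4 → ℤ), Ik K k ≠ latticeIdeal K (L : Set (Fin 4 → ℤ)) := by
  intro L hL
  have hmem := X_zero_pow_sub_mem_latticeIdeal_of_Ik_le hL.le
  exact X_zero_pow_sub_notMem_Ik K k (hL ▸ hmem)
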